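/- Let g be a finite-dimensional real unimodular Lie algebra with a meta-abelian decomposition g = m ⊕ n and an LCK structure (J, ⟨·,·⟩, θ) such that θ ≠ 0, θ vanishes on n, and n + J(n) = g. Set a = n ∩ J(n), let k be the orthogonal complement of a in n with respect to ⟨·,·⟩, write s = dim k and 2t = dim a, and let A ∈ g be the Lee vector, defined by θ(x) = ⟨A, x⟩ for all x ∈ g. Then there exists λ₀ ∈ ℝ such that [A, x] = λ₀·x for all x ∈ k, and this λ₀ satisfies s·λ₀ = t·‖A‖². -/

import Mathlib

/-!
Split `n = 𝔞 ⊕ 𝔨` with `𝔞 = n ∩ J(n)`. Integrability makes `u · x = [J u, x]` a commutative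
associative product on `𝔨`, and `dω = θ ∧ ω` becomes the Codazzi equation of a Hessian metric, up to
the covector `u ↦ θ(J u) = ⟨e, u⟩`. Multiplication by `e` is then a self-adjoint operator `M` with
`e · e = c e`, so that `M² = c M`. Either `c = 0` and `M = 0`, or the Codazzi equation shows that
`M x - c x` has norm zero for all `x`. Hence `M = c`.

Every `ad z` is an infinitesimal symplectic similitude of `𝔞` with factor `-θ(z)`, so its trace
there is `-t θ(z)`; unimodularity then gives `s c = t θ(z)` whenever `ad z` is the scalar `c` on
`𝔨`. For `z = J e` this forces `c ≥ 0`, hence `2 c + θ(J e) > 0` if `e ≠ 0`, which makes `𝔨`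
isotropic for `ω`. Therefore `A` and `J e` agree modulo the abelian ideal `n`, which is also true if
`e = 0` since then `A = 0`. So `ad A` is the scalar `c` on `𝔨`, and the trace formula at `z = A` is
the claim.
-/

open Module

section LinearAlgebra

variable {K V : Type*} [Field K] [AddCommGroup V] [Module K V]

theorem two_mul_trace_eq_mul_finrank_of_infinitesimal_similitude [FiniteDimensional K V]
    {ω : LinearMap.BilinForm K V} (hω : ω.Nondegenerate) {f : End K V} {c : K}
    (hf : ∀ x y, ω (f x) y + ω x (f y) = c * ω x y) :
    2 * LinearMap.trace K V f = c * finrank K V := by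
  have hconj : (ω.toDual hω).conj f + Dual.transpose (R := K) f = c • LinearMap.id := by
    ext φ y
    obtain ⟨x, rfl⟩ := (ω.toDual hω).surjective φ
    simpa [LinearEquiv.conj_apply, Dual.transpose_apply, LinearMap.BilinForm.toDual_def]
      using hf x y
  have htrace := congrArg (LinearMap.trace K (Dual K V)) hconj
  rw [map_add, map_smul, LinearMap.trace_id, LinearMap.trace_transpose', LinearMap.trace_conj',
    Subspace.dual_finrank_eq, smul_eq_mul] at htrace
  rw [two_mul, htrace]

theorem trace_eq_add_trace_restrict_of_disjoint [FiniteDimensional K V] {p q : Submodule K V}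
    (hpq : Disjoint p q) {f : End K V} (hf : ∀ x, f x ∈ p ⊔ q)
    (hp : ∀ x ∈ p, f x ∈ p) (hq : ∀ x ∈ q, f x ∈ q) :
    LinearMap.trace K V f =
      LinearMap.trace K p (f.restrict hp) + LinearMap.trace K q (f.restrict hq) := by
  have hindep : iSupIndep fun b : (Finset.univ : Finset Bool) ↦ cond b.1 p q :=
    (iSupIndep_pair (i := ⟨true, Finset.mem_univ _⟩) (j := ⟨false, Finset.mem_univ _⟩)
      (by simp [Subtype.ext_iff]) (by simp)).2 (by simpa using hpq)
  rw [← LinearMap.trace_restrict_eq_of_forall_mem (p ⊔ q) f hf,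
    LinearMap.trace_eq_sum_trace_restrict_of_eq_biSup (N := fun b ↦ cond b p q) Finset.univ hindep
      (by rintro (_ | _); exacts [hq, hp]) (p ⊔ q) (by simp [iSup_bool_eq]) (fun x _ ↦ hf x)]
  simp

end LinearAlgebra

/-- A commutative and associative product `μ` with a compatible symmetric anisotropic form `B`, the
compatibility being the Codazzi equation of a Hessian metric up to the conformal correction by the
covector `B e`. Associativity is encoded as commutation of the multiplication operators. -/
structure IsConformallyHessian {K V : Type*} [Field K] [AddCommGroup V] [Module K V]
    (B : LinearMap.BilinForm K V) (μ : V →ₗ[K] End K V) (e : V) : Prop where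
  symm : ∀ x y, B x y = B y x
  anisotropic : ∀ x, B x x = 0 → x = 0
  comm : ∀ u x, μ u x = μ x u
  left_comm : ∀ u v x, μ u (μ v x) = μ v (μ u x)
  codazzi : ∀ u v x, B (μ u x) v - B (μ v x) u = B e v * B x u - B e u * B x v

namespace IsConformallyHessian

variable {K V : Type*} [Field K] [AddCommGroup V] [Module K V]
  {B : LinearMap.BilinForm K V} {μ : V →ₗ[K] End K V} {e : V}

theorem apply_mul_add (h : IsConformallyHessian B μ e) (x u : V) :
    B e (μ x u) + B e x * B e u = B (μ e x) u + B e e * B x u := by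
  have hc := h.codazzi u e x
  rw [h.symm (μ u x) e, h.symm x e, h.comm u x] at hc
  linear_combination hc

theorem apply_mul_left (h : IsConformallyHessian B μ e) (x u : V) :
    B (μ e x) u = B x (μ e u) := by
  have hxu := h.apply_mul_add x u
  have hux := h.apply_mul_add u x
  rw [h.comm u x, h.symm u x, h.symm (μ e u) x] at hux
  linear_combination hux - hxu

theorem apply_mul_mul_comm (h : IsConformallyHessian B μ e) (x u : V) :
    B e (μ e x) * B e u = B e (μ e u) * B e x := by
  have hxu := h.apply_mul_add (μ e x) u
  have hux := h.apply_mul_add (μ e u) x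
  have hmul : μ (μ e x) u = μ (μ e u) x := by
    rw [h.comm, h.left_comm, h.comm u x, h.left_comm, h.comm x]
  have hself : B (μ e (μ e x)) u = B (μ e (μ e u)) x := by
    rw [h.apply_mul_left, h.apply_mul_left, h.symm]
  rw [hmul, hself, h.apply_mul_left x u, h.symm x] at hxu
  linear_combination hxu - hux

theorem exists_mul_self_eq_smul (h : IsConformallyHessian B μ e) : ∃ c : K, μ e e = c • e := by
  rcases eq_or_ne e 0 with rfl | he
  · exact ⟨0, by simp⟩
  have hee : B e e ≠ 0 := mt (h.anisotropic e) he
  refine ⟨B e (μ e e) / B e e, sub_eq_zero.1 (h.anisotropic _ ?_)⟩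
  have horth (x : V) : B (μ e e - (B e (μ e e) / B e e) • e) x = 0 := by
    rw [map_sub, map_smul, LinearMap.sub_apply, LinearMap.smul_apply, smul_eq_mul,
      div_mul_eq_mul_div, h.apply_mul_left, sub_eq_zero, eq_div_iff hee, h.apply_mul_mul_comm]
  exact horth _

theorem exists_mul_eq_smul (h : IsConformallyHessian B μ e) : ∃ c : K, ∀ x, μ e x = c • x := by
  rcases eq_or_ne e 0 with rfl | he
  · exact ⟨0, by simp⟩
  have hee : B e e ≠ 0 := mt (h.anisotropic e) he
  obtain ⟨c, hc⟩ := h.exists_mul_self_eq_smul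
  have hsq (x : V) : μ e (μ e x) = c • μ e x := by
    rw [h.comm e x, h.left_comm, hc, map_smul]
  have hB (x : V) : B e (μ e x) = c * B e x := by
    rw [← h.apply_mul_left, hc, map_smul, LinearMap.smul_apply, smul_eq_mul]
  refine ⟨c, fun x ↦ sub_eq_zero.1 ?_⟩
  rcases eq_or_ne c 0 with rfl | hc0
  · rw [zero_smul, sub_zero]
    exact h.anisotropic _ (by rw [h.apply_mul_left, hsq, zero_smul, map_zero])
  set y := μ e x - c • x
  have hy : μ e y = 0 := by rw [map_sub, hsq, map_smul, sub_self]
  have hBy : B e y = 0 := by simpa [hy, hc0] using hB y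
  have hByy : B e (μ y y) = 0 := by simpa [h.left_comm e y y, hy, hc0] using hB (μ y y)
  have hyy := h.apply_mul_add y y
  rw [hByy, hBy, hy] at hyy
  exact h.anisotropic y (by simpa [hee] using hyy)

end IsConformallyHessian

section Hermitian

variable {K V : Type*} [Field K] [AddCommGroup V] [Module K V]

/-- The fundamental 2-form `ω(x, y) = ⟨J x, y⟩` of an almost Hermitian structure. -/
def fundamentalForm (B : LinearMap.BilinForm K V) (J : End K V) : LinearMap.BilinForm K V :=
  B ∘ₗ J

@[simp]
theorem fundamentalForm_apply (B : LinearMap.BilinForm K V) (J : End K V) (x y : V) :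
    fundamentalForm B J x y = B (J x) y :=
  rfl

/-- The largest `J`-invariant subspace `n ∩ J(n)` of `n` when `J² = -1`, the `𝔞` of the
decomposition `n = 𝔞 ⊕ 𝔨`. -/
def invariantPart (J : End K V) (n : Submodule K V) : Submodule K V :=
  n ⊓ n.map J

theorem mem_invariantPart {J : End K V} (hJ : ∀ x, J (J x) = -x) {n : Submodule K V} {x : V} :
    x ∈ invariantPart J n ↔ x ∈ n ∧ J x ∈ n := by
  refine and_congr_right fun hx ↦ ⟨?_, fun hJx ↦ ⟨-J x, n.neg_mem hJx, by simp [hJ]⟩⟩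
  rintro ⟨y, hy, rfl⟩
  rw [hJ]
  exact n.neg_mem hy

theorem apply_mem_invariantPart {J : End K V} (hJ : ∀ x, J (J x) = -x) {n : Submodule K V} {x : V}
    (hx : x ∈ invariantPart J n) : J x ∈ invariantPart J n := by
  rw [mem_invariantPart hJ] at hx ⊢
  exact ⟨hx.2, by simpa [hJ] using hx.1⟩

/-- The orthogonal complement in `n` of its largest `J`-invariant subspace, the `𝔨` of the
decomposition `n = 𝔞 ⊕ 𝔨`. -/
def invariantPartCompl (B : LinearMap.BilinForm K V) (J : End K V) (n : Submodule K V) :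
    Submodule K V :=
  n ⊓ B.orthogonal (invariantPart J n)

variable [LinearOrder K]

/-- A linear almost Hermitian structure: an inner product `B` together with a complex structure `J`
which is isometric for it. -/
structure IsAlmostHermitian (B : LinearMap.BilinForm K V) (J : End K V) : Prop where
  symm : ∀ x y, B x y = B y x
  pos : ∀ x, x ≠ 0 → 0 < B x x
  sq : ∀ x, J (J x) = -x
  isometry : ∀ x y, B (J x) (J y) = B x y

namespace IsAlmostHermitian

variable {B : LinearMap.BilinForm K V} {J : End K V} {n : Submodule K V}

theorem eq_zero_of_apply_self (h : IsAlmostHermitian B J) {x : V} (hx : B x x = 0) : x = 0 :=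
  not_imp_comm.1 (h.pos x) hx.not_gt

theorem isRefl (h : IsAlmostHermitian B J) : B.IsRefl :=
  LinearMap.BilinForm.IsSymm.isRefl ⟨h.symm⟩

theorem apply_left (h : IsAlmostHermitian B J) (x y : V) : B (J x) y = -B x (J y) := by
  rw [← h.isometry x (J y), h.sq, map_neg, neg_neg]

theorem disjoint_orthogonal (h : IsAlmostHermitian B J) (W : Submodule K V) :
    Disjoint W (B.orthogonal W) :=
  Submodule.disjoint_def.2 fun x hx hxW ↦ h.eq_zero_of_apply_self (hxW x hx)

theorem nondegenerate_restrict (h : IsAlmostHermitian B J) (W : Submodule K V) :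
    (B.restrict W).Nondegenerate :=
  B.nondegenerate_restrict_of_disjoint_orthogonal h.isRefl (h.disjoint_orthogonal W)

theorem mem_invariantPartCompl (h : IsAlmostHermitian B J) {x : V} :
    x ∈ invariantPartCompl B J n ↔ x ∈ n ∧ ∀ y ∈ invariantPart J n, B x y = 0 := by
  simp [invariantPartCompl, LinearMap.BilinForm.mem_orthogonal_iff, h.symm x]

theorem disjoint_invariantPart (h : IsAlmostHermitian B J) :
    Disjoint (invariantPart J n) (invariantPartCompl B J n) :=
  (h.disjoint_orthogonal _).mono_right inf_le_right

theorem invariantPart_sup_invariantPartCompl [FiniteDimensional K V]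
    (h : IsAlmostHermitian B J) : invariantPart J n ⊔ invariantPartCompl B J n = n := by
  have hcompl : IsCompl (invariantPart J n) (B.orthogonal (invariantPart J n)) :=
    (LinearMap.BilinForm.isCompl_orthogonal_iff_disjoint h.isRefl).2 (h.disjoint_orthogonal _)
  have hle : invariantPart J n ≤ n := inf_le_left
  rw [invariantPartCompl, inf_comm, ← sup_inf_assoc_of_le _ hle, hcompl.sup_eq_top, top_inf_eq]

theorem exists_eq_add_apply [FiniteDimensional K V] (h : IsAlmostHermitian B J)
    (hspan : n ⊔ n.map J = ⊤) (z : V) :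
    ∃ v ∈ n, ∃ q ∈ invariantPartCompl B J n, z = v + J q := by
  obtain ⟨v, hv, _, ⟨u, hu, rfl⟩, rfl⟩ := Submodule.mem_sup.1 (hspan ▸ Submodule.mem_top : z ∈ _)
  rw [← h.invariantPart_sup_invariantPartCompl (n := n)] at hu
  obtain ⟨w, hw, q, hq, rfl⟩ := Submodule.mem_sup.1 hu
  exact ⟨v + J w, n.add_mem hv ((mem_invariantPart h.sq).1 hw).2, q, hq, by rw [map_add, add_assoc]⟩

theorem dual_eq_zero [FiniteDimensional K V] (h : IsAlmostHermitian B J)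
    (hspan : n ⊔ n.map J = ⊤) {φ : Dual K V} (hn : ∀ x ∈ n, φ x = 0)
    (hJ : ∀ x ∈ invariantPartCompl B J n, φ (J x) = 0) : φ = 0 := by
  ext z
  obtain ⟨v, hv, q, hq, rfl⟩ := h.exists_eq_add_apply hspan z
  rw [map_add, hn v hv, hJ q hq, add_zero, LinearMap.zero_apply]

theorem exists_forall_apply_eq [FiniteDimensional K V] (h : IsAlmostHermitian B J)
    (W : Submodule K V) (φ : Dual K V) : ∃ e ∈ W, ∀ u ∈ W, B e u = φ u := by
  obtain ⟨e, he⟩ :=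
    ((B.restrict W).toDual (h.nondegenerate_restrict W)).surjective (φ ∘ₗ W.subtype)
  exact ⟨e, e.2, fun u hu ↦ LinearMap.congr_fun he ⟨u, hu⟩⟩

theorem sub_apply_mem_of_isotropic [FiniteDimensional K V] (h : IsAlmostHermitian B J)
    (hspan : n ⊔ n.map J = ⊤)
    (hiso : ∀ x ∈ invariantPartCompl B J n, ∀ y ∈ invariantPartCompl B J n, B (J x) y = 0)
    {A e : V} (he : e ∈ invariantPartCompl B J n)
    (hA : ∀ u ∈ invariantPartCompl B J n, B e u = B A (J u)) : A - J e ∈ n := by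
  obtain ⟨v, hv, q, hq, rfl⟩ := h.exists_eq_add_apply hspan A
  have horth (u) (hu : u ∈ invariantPartCompl B J n) : B v (J u) = 0 := by
    rw [← h.invariantPart_sup_invariantPartCompl (n := n)] at hv
    obtain ⟨w, hw, p, hp, rfl⟩ := Submodule.mem_sup.1 hv
    rw [h.symm, map_add, h.apply_left,
      (h.mem_invariantPartCompl.1 hu).2 _ (apply_mem_invariantPart h.sq hw), hiso u hu p hp,
      neg_zero, add_zero]
  have hsub := Submodule.sub_mem _ he hq
  have heq : e = q := by
    refine sub_eq_zero.1 (h.eq_zero_of_apply_self ?_)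
    rw [map_sub B, LinearMap.sub_apply, hA _ hsub, map_add B, LinearMap.add_apply, horth _ hsub,
      h.isometry, zero_add, sub_self]
  rwa [heq, add_sub_cancel_right]

variable [IsStrictOrderedRing K]

theorem isAlt_fundamentalForm (h : IsAlmostHermitian B J) : (fundamentalForm B J).IsAlt := by
  intro x
  have hx := h.apply_left x x
  rw [h.symm x] at hx
  exact self_eq_neg.1 hx

theorem nondegenerate_restrict_fundamentalForm (h : IsAlmostHermitian B J) {W : Submodule K V}
    (hW : ∀ x ∈ W, J x ∈ W) : ((fundamentalForm B J).restrict W).Nondegenerate := by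
  refine LinearMap.BilinForm.nondegenerate_restrict_of_disjoint_orthogonal _
    h.isAlt_fundamentalForm.isRefl (Submodule.disjoint_def.2 fun x hx hxW ↦ ?_)
  refine h.eq_zero_of_apply_self ?_
  simpa [h.sq] using! hxW (J x) (hW x hx)

end IsAlmostHermitian

end Hermitian

section LieAlgebra

variable {K g : Type*} [Field K] [LieRing g] [LieAlgebra K g]

/-- Integrability of an invariant almost complex structure: its Nijenhuis tensor vanishes. -/
def IsIntegrable (J : End K g) : Prop :=
  ∀ x y, ⁅x, y⁆ - ⁅J x, J y⁆ + J ⁅x, J y⁆ + J ⁅J x, y⁆ = 0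

/-- The 1-form `θ` is a Lee form of the 2-form `ω`: it satisfies `dω = θ ∧ ω`, where `d` is the
Chevalley–Eilenberg differential. Closedness of `θ` is not included. -/
def IsLeeForm (ω : LinearMap.BilinForm K g) (θ : Dual K g) : Prop :=
  ∀ x y z, -ω ⁅x, y⁆ z - ω ⁅y, z⁆ x - ω ⁅z, x⁆ y = θ x * ω y z + θ y * ω z x + θ z * ω x y

theorem IsLeeForm.lie_add_lie {ω : LinearMap.BilinForm K g} {θ : Dual K g} (hθ : IsLeeForm ω θ)
    (hω : ω.IsAlt) {x y : g} (hxy : ⁅x, y⁆ = 0) (hx : θ x = 0) (hy : θ y = 0) (z : g) :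
    ω ⁅z, x⁆ y + ω x ⁅z, y⁆ = -θ z * ω x y := by
  have h := hθ x y z
  rw [hxy, hx, hy, ← lie_skew y z, map_neg, LinearMap.neg_apply, hω.neg_eq ⁅z, y⁆ x] at h
  simp only [map_zero, LinearMap.zero_apply] at h
  linear_combination -h

theorem IsLeeForm.apply_eq_zero_of_lie_eq_smul {ω : LinearMap.BilinForm K g} {θ : Dual K g}
    (hθ : IsLeeForm ω θ) (hω : ω.IsAlt) {x y z : g} (hxy : ⁅x, y⁆ = 0) (hx : θ x = 0)
    (hy : θ y = 0) {c : K} (hzx : ⁅z, x⁆ = c • x) (hzy : ⁅z, y⁆ = c • y)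
    (hc : 2 * c + θ z ≠ 0) : ω x y = 0 := by
  have h := hθ.lie_add_lie hω hxy hx hy z
  rw [hzx, hzy, map_smul, map_smul, LinearMap.smul_apply, smul_eq_mul] at h
  exact (mul_eq_zero.1 (by linear_combination h : (2 * c + θ z) * ω x y = 0)).resolve_left hc

theorem trace_toEnd_eq_add_of_disjoint {M : Type*} [AddCommGroup M] [Module K M]
    [LieRingModule g M] [LieModule K g M] [FiniteDimensional K M] {N₁ N₂ : LieSubmodule K g M}
    (hN : Disjoint N₁ N₂) {z : g} (hz : ∀ x : M, ⁅z, x⁆ ∈ N₁ ⊔ N₂) :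
    LinearMap.trace K M (LieModule.toEnd K g M z) =
      LinearMap.trace K N₁ (LieModule.toEnd K g N₁ z) +
        LinearMap.trace K N₂ (LieModule.toEnd K g N₂ z) :=
  trace_eq_add_trace_restrict_of_disjoint (LieSubmodule.disjoint_toSubmodule.2 hN)
    (by simpa only [← LieSubmodule.sup_toSubmodule] using! hz)
    (fun _ ↦ N₁.lie_mem) (fun _ ↦ N₂.lie_mem)

theorem lie_mem_of_sup_eq_top {m n : Submodule K g} (hmn : m ⊔ n = ⊤)
    (hm : ∀ x ∈ m, ∀ y ∈ m, ⁅x, y⁆ = 0) (hn : ∀ x : g, ∀ y ∈ n, ⁅x, y⁆ ∈ n) (x y : g) :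
    ⁅x, y⁆ ∈ n := by
  obtain ⟨p, hp, v, hv, rfl⟩ := Submodule.mem_sup.1 (hmn ▸ Submodule.mem_top : x ∈ m ⊔ n)
  obtain ⟨q, hq, w, hw, rfl⟩ := Submodule.mem_sup.1 (hmn ▸ Submodule.mem_top : y ∈ m ⊔ n)
  rw [lie_add, add_lie p v q, hm p hp q hq, zero_add, ← lie_skew v q]
  exact n.add_mem (n.neg_mem (hn q v hv)) (hn _ w hw)

section AbelianIdeal

variable {J : End K g} {n : Submodule K g}

theorem apply_lie_apply_sub (hint : IsIntegrable J) {u v : g} (huv : ⁅u, v⁆ = 0) :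
    J (⁅J u, v⁆ - ⁅J v, u⁆) = ⁅J u, J v⁆ := by
  have h := hint u v
  rw [huv, ← lie_skew u (J v), map_neg] at h
  rw [map_sub, ← sub_eq_zero, ← h]
  abel

theorem lie_apply_comm (hJ : ∀ x, J (J x) = -x) (hint : IsIntegrable J)
    (hab : ∀ x ∈ n, ∀ y ∈ n, ⁅x, y⁆ = 0) (hder : ∀ x y : g, ⁅x, y⁆ ∈ n) {k : LieIdeal K g}
    (hkn : k.toSubmodule ≤ n) (hk : Disjoint (invariantPart J n) k.toSubmodule) {u v : g}
    (hu : u ∈ k) (hv : v ∈ k) : ⁅J u, v⁆ = ⁅J v, u⁆ := by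
  have hdiff : ⁅J u, v⁆ - ⁅J v, u⁆ ∈ k := k.sub_mem (k.lie_mem hv) (k.lie_mem hu)
  refine sub_eq_zero.1 (Submodule.disjoint_def.1 hk _ ?_ hdiff)
  rw [mem_invariantPart hJ, apply_lie_apply_sub hint (hab u (hkn hu) v (hkn hv))]
  exact ⟨hkn hdiff, hder _ _⟩

theorem lie_apply_apply_eq_zero (hJ : ∀ x, J (J x) = -x) (hint : IsIntegrable J)
    (hab : ∀ x ∈ n, ∀ y ∈ n, ⁅x, y⁆ = 0) (hder : ∀ x y : g, ⁅x, y⁆ ∈ n) {k : LieIdeal K g}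
    (hkn : k.toSubmodule ≤ n) (hk : Disjoint (invariantPart J n) k.toSubmodule) {u v : g}
    (hu : u ∈ k) (hv : v ∈ k) : ⁅J u, J v⁆ = 0 := by
  rw [← apply_lie_apply_sub hint (hab u (hkn hu) v (hkn hv)),
    lie_apply_comm hJ hint hab hder hkn hk hu hv, sub_self, map_zero]

theorem lie_mem_invariantPart (hJ : ∀ x, J (J x) = -x) (hint : IsIntegrable J)
    (hab : ∀ x ∈ n, ∀ y ∈ n, ⁅x, y⁆ = 0) (hder : ∀ x y : g, ⁅x, y⁆ ∈ n)
    (hspan : n ⊔ n.map J = ⊤) {x : g} (hx : x ∈ invariantPart J n) (z : g) :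
    ⁅z, x⁆ ∈ invariantPart J n := by
  obtain ⟨hxn, hJx⟩ := (mem_invariantPart hJ).1 hx
  obtain ⟨v, hv, _, ⟨u, hu, rfl⟩, rfl⟩ := Submodule.mem_sup.1 (hspan ▸ Submodule.mem_top : z ∈ _)
  have hJu : J ⁅J u, x⁆ = ⁅J u, J x⁆ := by
    have h := hint u x
    rw [hab u hu x hxn, hab u hu (J x) hJx, map_zero] at h
    rw [← sub_eq_zero, ← h]
    abel
  rw [add_lie, hab v hv x hxn, zero_add, mem_invariantPart hJ, hJu]
  exact ⟨hder _ _, hder _ _⟩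

end AbelianIdeal

/-- The bilinear product `u · x = [J u, x]` on an ideal, as a map sending `u` to its multiplication
operator. -/
def adApply (J : End K g) (k : LieIdeal K g) : k →ₗ[K] End K k :=
  (LieModule.toEnd K g k : g →ₗ[K] End K k) ∘ₗ J ∘ₗ k.toSubmodule.subtype

end LieAlgebra

section LCK

variable {K g : Type*} [Field K] [LinearOrder K] [IsStrictOrderedRing K] [LieRing g]
  [LieAlgebra K g] {B : LinearMap.BilinForm K g} {J : End K g} {θ : Dual K g} {n : Submodule K g}

theorem lie_mem_invariantPartCompl (hBJ : IsAlmostHermitian B J) (hint : IsIntegrable J)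
    (hθ : IsLeeForm (fundamentalForm B J) θ) (hab : ∀ x ∈ n, ∀ y ∈ n, ⁅x, y⁆ = 0)
    (hder : ∀ x y : g, ⁅x, y⁆ ∈ n) (hθn : ∀ x ∈ n, θ x = 0) (hspan : n ⊔ n.map J = ⊤)
    {x : g} (hx : x ∈ invariantPartCompl B J n) (z : g) :
    ⁅z, x⁆ ∈ invariantPartCompl B J n := by
  obtain ⟨hxn, hxa⟩ := hBJ.mem_invariantPartCompl.1 hx
  refine hBJ.mem_invariantPartCompl.2 ⟨hder _ _, fun y hy ↦ ?_⟩
  have hJy : J y ∈ invariantPart J n := apply_mem_invariantPart hBJ.sq hy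
  have hzJy := lie_mem_invariantPart hBJ.sq hint hab hder hspan hJy z
  have h := hθ.lie_add_lie hBJ.isAlt_fundamentalForm (hab x hxn _ hJy.1) (hθn x hxn)
    (hθn _ hJy.1) z
  rw [fundamentalForm_apply, fundamentalForm_apply, fundamentalForm_apply, hBJ.isometry,
    hBJ.isometry, hxa y hy, hBJ.apply_left x, hxa _ (apply_mem_invariantPart hBJ.sq hzJy)] at h
  simpa using h

theorem isConformallyHessian_adApply (hBJ : IsAlmostHermitian B J)
    (hθ : IsLeeForm (fundamentalForm B J) θ) {k : LieIdeal K g}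
    (hcomm : ∀ u ∈ k, ∀ v ∈ k, ⁅J u, v⁆ = ⁅J v, u⁆) (hlie : ∀ u ∈ k, ∀ v ∈ k, ⁅J u, J v⁆ = 0)
    (hθk : ∀ x ∈ k, θ x = 0) {e : k} (he : ∀ u ∈ k, B e u = θ (J u)) :
    IsConformallyHessian (B.restrict k.toSubmodule) (adApply J k) e where
  symm x y := hBJ.symm x y
  anisotropic x hx := Subtype.ext (hBJ.eq_zero_of_apply_self hx)
  comm u x := Subtype.ext (hcomm u u.2 x x.2)
  left_comm u v x := Subtype.ext <| by
    change ⁅J u, ⁅J v, (x : g)⁆⁆ = ⁅J v, ⁅J u, (x : g)⁆⁆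
    rw [leibniz_lie, hlie u u.2 v v.2, zero_lie, zero_add]
  codazzi u v x := by
    change B ⁅J u, (x : g)⁆ v - B ⁅J v, (x : g)⁆ u = B e v * B x u - B e u * B x v
    have h := hθ x (J u) (J v)
    rw [hlie u u.2 v v.2, hθk x x.2, ← lie_skew (x : g) (J u)] at h
    simp only [fundamentalForm_apply, map_neg, map_zero, LinearMap.neg_apply,
      LinearMap.zero_apply, hBJ.isometry, hBJ.sq, hBJ.symm v x] at h
    rw [he u u.2, he v v.2]
    linear_combination h

theorem two_mul_trace_toEnd_eq [FiniteDimensional K g] (hBJ : IsAlmostHermitian B J)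
    (hθ : IsLeeForm (fundamentalForm B J) θ) {a : LieIdeal K g} (hab : ∀ x ∈ a, ∀ y ∈ a, ⁅x, y⁆ = 0)
    (hθa : ∀ x ∈ a, θ x = 0) (hJa : ∀ x ∈ a, J x ∈ a) (z : g) :
    2 * LinearMap.trace K a (LieModule.toEnd K g a z) = -θ z * finrank K a :=
  two_mul_trace_eq_mul_finrank_of_infinitesimal_similitude
    (hBJ.nondegenerate_restrict_fundamentalForm (W := a.toSubmodule) hJa) fun x y ↦
      hθ.lie_add_lie hBJ.isAlt_fundamentalForm (hab x x.2 y y.2) (hθa x x.2) (hθa y y.2) z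

theorem two_mul_finrank_mul_eq_of_unimodular [FiniteDimensional K g] (hBJ : IsAlmostHermitian B J)
    (hθ : IsLeeForm (fundamentalForm B J) θ)
    (hunimod : ∀ x : g, LinearMap.trace K g (LieAlgebra.ad K g x) = 0) {a k : LieIdeal K g}
    (hab : ∀ x ∈ a, ∀ y ∈ a, ⁅x, y⁆ = 0) (hθa : ∀ x ∈ a, θ x = 0) (hJa : ∀ x ∈ a, J x ∈ a)
    (hak : Disjoint a k) (hder : ∀ x y : g, ⁅x, y⁆ ∈ a ⊔ k) {z : g} {c : K}
    (hz : ∀ x ∈ k, ⁅z, x⁆ = c • x) : 2 * (finrank K k * c) = finrank K a * θ z := by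
  have hk : LieModule.toEnd K g k z = c • LinearMap.id :=
    LinearMap.ext fun x ↦ Subtype.ext (hz x x.2)
  have htrace : 0 = LinearMap.trace K a (LieModule.toEnd K g a z) + c * finrank K k := by
    rw [← hunimod z, LieAlgebra.ad, trace_toEnd_eq_add_of_disjoint hak (hder z), hk,
      map_smul, LinearMap.trace_id, smul_eq_mul]
  have ha := two_mul_trace_toEnd_eq hBJ hθ hab hθa hJa z
  linear_combination -2 * htrace - ha

theorem apply_apply_eq_zero_of_lie_eq_smul (hBJ : IsAlmostHermitian B J)
    (hθ : IsLeeForm (fundamentalForm B J) θ) {k : Submodule K g}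
    (hab : ∀ x ∈ k, ∀ y ∈ k, ⁅x, y⁆ = 0) (hθk : ∀ x ∈ k, θ x = 0) {z : g} {c : K}
    (hz : ∀ x ∈ k, ⁅z, x⁆ = c • x) (hc : 0 ≤ c) (hθz : 0 < θ z) :
    ∀ x ∈ k, ∀ y ∈ k, B (J x) y = 0 := fun x hx y hy ↦
  hθ.apply_eq_zero_of_lie_eq_smul hBJ.isAlt_fundamentalForm (hab x hx y hy) (hθk x hx) (hθk y hy)
    (hz x hx) (hz y hy) (by positivity)

theorem sub_apply_mem_of_lie_eq_smul [FiniteDimensional K g] (hBJ : IsAlmostHermitian B J)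
    (hθ : IsLeeForm (fundamentalForm B J) θ) (hab : ∀ x ∈ n, ∀ y ∈ n, ⁅x, y⁆ = 0)
    (hθn : ∀ x ∈ n, θ x = 0) (hspan : n ⊔ n.map J = ⊤) {A e : g} (hA : ∀ x, θ x = B A x)
    (he : e ∈ invariantPartCompl B J n) (heθ : ∀ u ∈ invariantPartCompl B J n, B e u = θ (J u))
    {c r : K} (hc : ∀ x ∈ invariantPartCompl B J n, ⁅J e, x⁆ = c • x) (hr : 0 ≤ r)
    (htrace : 2 * (finrank K (invariantPartCompl B J n) * c) = r * θ (J e)) : A - J e ∈ n := by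
  rcases eq_or_ne e 0 with rfl | he0
  · have hθ0 : θ = 0 := hBJ.dual_eq_zero hspan hθn fun x hx ↦ by simpa using (heθ x hx).symm
    have hA0 : A = 0 := hBJ.eq_zero_of_apply_self (by rw [← hA, hθ0, LinearMap.zero_apply])
    simp [hA0]
  have hθe : 0 < θ (J e) := heθ e he ▸ hBJ.pos e he0
  have hfinrank : 0 < (finrank K (invariantPartCompl B J n) : K) :=
    Nat.cast_pos.2 (finrank_pos_iff_exists_ne_zero.2 ⟨⟨e, he⟩, by simpa using he0⟩)
  have hc0 : 0 ≤ c :=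
    nonneg_of_mul_nonneg_right (by linarith [mul_nonneg hr hθe.le]) hfinrank
  have hiso := apply_apply_eq_zero_of_lie_eq_smul hBJ hθ (k := invariantPartCompl B J n)
    (fun x hx y hy ↦ hab x hx.1 y hy.1) (fun x hx ↦ hθn x hx.1) hc hc0 hθe
  exact hBJ.sub_apply_mem_of_isotropic hspan hiso he fun u hu ↦ by rw [heθ u hu, hA]

theorem lck_ad_Lee_is_scalar_on_k_general [FiniteDimensional K g] (hBJ : IsAlmostHermitian B J)
    (hint : IsIntegrable J) (hθ : IsLeeForm (fundamentalForm B J) θ)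
    (hab : ∀ x ∈ n, ∀ y ∈ n, ⁅x, y⁆ = 0) (hder : ∀ x y : g, ⁅x, y⁆ ∈ n)
    (hunimod : ∀ x : g, LinearMap.trace K g (LieAlgebra.ad K g x) = 0)
    (hθn : ∀ x ∈ n, θ x = 0) (hspan : n ⊔ n.map J = ⊤) {A : g} (hA : ∀ x, θ x = B A x) :
    ∃ c : K, (∀ x ∈ invariantPartCompl B J n, ⁅A, x⁆ = c • x) ∧
      2 * (finrank K (invariantPartCompl B J n) * c) = finrank K (invariantPart J n) * B A A := by
  let a : LieIdeal K g :=
    { invariantPart J n with lie_mem := (lie_mem_invariantPart hBJ.sq hint hab hder hspan · _) }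
  let k : LieIdeal K g :=
    { invariantPartCompl B J n with
      lie_mem := (lie_mem_invariantPartCompl hBJ hint hθ hab hder hθn hspan · _) }
  have hdisj : Disjoint a.toSubmodule k.toSubmodule := hBJ.disjoint_invariantPart
  have hsup : (a ⊔ k).toSubmodule = n := hBJ.invariantPart_sup_invariantPartCompl
  obtain ⟨e, he, heθ⟩ := hBJ.exists_forall_apply_eq k.toSubmodule (θ ∘ₗ J)
  obtain ⟨c, hc⟩ := (isConformallyHessian_adApply hBJ hθ (k := k) (e := ⟨e, he⟩)
    (fun u hu v ↦ lie_apply_comm hBJ.sq hint hab hder inf_le_left hdisj hu)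
    (fun u hu v ↦ lie_apply_apply_eq_zero hBJ.sq hint hab hder inf_le_left hdisj hu)
    (fun x hx ↦ hθn x hx.1) heθ).exists_mul_eq_smul
  have hJek (x) (hx : x ∈ k) : ⁅J e, x⁆ = c • x := congrArg Subtype.val (hc ⟨x, hx⟩)
  have htrace {z : g} (hz : ∀ x ∈ k, ⁅z, x⁆ = c • x) :
      2 * (finrank K k * c) = finrank K a * θ z :=
    two_mul_finrank_mul_eq_of_unimodular hBJ hθ hunimod (a := a) (fun x hx y hy ↦ hab x hx.1 y hy.1)
      (fun x hx ↦ hθn x hx.1) (fun x ↦ apply_mem_invariantPart hBJ.sq)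
      (LieSubmodule.disjoint_toSubmodule.1 hdisj) (fun x y ↦ hsup.ge (hder x y)) hz
  have hAe : A - J e ∈ n := sub_apply_mem_of_lie_eq_smul hBJ hθ hab hθn hspan hA he heθ hJek
    (Nat.cast_nonneg (finrank K a)) (htrace hJek)
  have hAk (x) (hx : x ∈ k) : ⁅A, x⁆ = c • x := by
    rw [← hJek x hx, ← sub_eq_zero, ← sub_lie, hab _ hAe x hx.1]
  exact ⟨c, hAk, hA A ▸ htrace hAk⟩

end LCK

/-- For a non-Vaisman LCK structure on a unimodular meta-abelian Lie algebra
`g = m ⊕ n` with `n + J(n) = g`, writing `s = dim k` and `2t = dim a`, the Lee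
vector `A` acts on `k` as multiplication by a scalar `λ₀` with `s·λ₀ = t·‖A‖²`. -/
theorem lck_ad_Lee_is_scalar_on_k
    (g : Type*) [LieRing g] [LieAlgebra ℝ g] [FiniteDimensional ℝ g]
    (B : g →ₗ[ℝ] g →ₗ[ℝ] ℝ) (J : g →ₗ[ℝ] g) (θ : g →ₗ[ℝ] ℝ)
    (hBsymm : ∀ x y : g, B x y = B y x)
    (hBpos : ∀ x : g, x ≠ 0 → 0 < B x x)
    (hJ2 : ∀ x : g, J (J x) = -x)
    (hJB : ∀ x y : g, B (J x) (J y) = B x y)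
    (hJint : ∀ x y : g, ⁅x, y⁆ - ⁅J x, J y⁆ + J ⁅x, J y⁆ + J ⁅J x, y⁆ = 0)
    (hθbr : ∀ x y : g, θ ⁅x, y⁆ = 0)
    (hLCK : ∀ x y z : g,
      -(B (J ⁅x, y⁆) z) - B (J ⁅y, z⁆) x - B (J ⁅z, x⁆) y =
        θ x * B (J y) z + θ y * B (J z) x + θ z * B (J x) y)
    (m n : Submodule ℝ g)
    (hcompl : IsCompl m n)
    (hnab : ∀ x ∈ n, ∀ y ∈ n, ⁅x, y⁆ = (0 : g))
    (hnideal : ∀ x : g, ∀ y ∈ n, ⁅x, y⁆ ∈ n)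
    (hmab : ∀ x ∈ m, ∀ y ∈ m, ⁅x, y⁆ = (0 : g))
    (hunimod : ∀ x : g, LinearMap.trace ℝ g (LieAlgebra.ad ℝ g x) = 0)
    (hθ0 : θ ≠ 0)
    (hθn : ∀ x ∈ n, θ x = 0)
    (hspan : n ⊔ Submodule.map J n = ⊤)
    (k : Submodule ℝ g)
    (hk : ∀ v : g, v ∈ k ↔ v ∈ n ∧ ∀ y ∈ n ⊓ Submodule.map J n, B v y = 0)
    (s t : ℕ)
    (hs : Module.finrank ℝ ↥k = s)
    (ht : Module.finrank ℝ ↥(n ⊓ Submodule.map J n) = 2 * t)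
    (A : g) (hA : ∀ x : g, θ x = B A x) :
    ∃ lam : ℝ, (∀ x ∈ k, ⁅A, x⁆ = lam • x) ∧ (s : ℝ) * lam = (t : ℝ) * B A A := by
  have hBJ : IsAlmostHermitian B J := ⟨hBsymm, hBpos, hJ2, hJB⟩
  obtain rfl : k = invariantPartCompl B J n :=
    Submodule.ext fun v ↦ (hk v).trans hBJ.mem_invariantPartCompl.symm
  have hder := lie_mem_of_sup_eq_top hcompl.sup_eq_top hmab hnideal
  obtain ⟨c, hc, htrace⟩ :=
    lck_ad_Lee_is_scalar_on_k_general hBJ hJint hLCK hnab hder hunimod hθn hspan hA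
  refine ⟨c, hc, ?_⟩
  rw [hs, invariantPart, ht, Nat.cast_mul, Nat.cast_ofNat, mul_assoc] at htrace
  exact mul_left_cancel₀ two_ne_zero htrace
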